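/- Let K be the convex hull of the four qubit density matrices |0⟩⟨0|, |1⟩⟨1|, |+⟩⟨+|, |−⟩⟨−|. Then K does not admit a preparation-and-measurement noncontextual model. -/

import Mathlib

open Matrix
open scoped Kronecker ComplexOrder BigOperators

noncomputable section

/-- A density matrix: positive semidefinite with trace 1. -/
def IsDensity {d : Type*} [Fintype d] [DecidableEq d] (ρ : Matrix d d ℂ) : Prop :=
  ρ.PosSemidef ∧ ρ.trace = 1

/-- Partial trace over the second (B) factor. -/
def trB {m n : ℕ} (ρ : Matrix (Fin m × Fin n) (Fin m × Fin n) ℂ) :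
    Matrix (Fin m) (Fin m) ℂ := fun i j => ∑ k, ρ (i, k) (j, k)

/-- Partial trace over the first (A) factor. -/
def trA {m n : ℕ} (ρ : Matrix (Fin m × Fin n) (Fin m × Fin n) ℂ) :
    Matrix (Fin n) (Fin n) ℂ := fun k l => ∑ i, ρ (i, k) (i, l)

/-- The set of states remotely preparable on Alice's side. -/
def LambdaA {m n : ℕ} (ρ : Matrix (Fin m × Fin n) (Fin m × Fin n) ℂ) :
    Set (Matrix (Fin m) (Fin m) ℂ) :=
  {σ | IsDensity σ ∧ ∃ E : Matrix (Fin n) (Fin n) ℂ, E.PosSemidef ∧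
    σ = trB (((1 : Matrix (Fin m) (Fin m) ℂ) ⊗ₖ E) * ρ)}

/-- The set of states remotely preparable on Bob's side. -/
def LambdaB {m n : ℕ} (ρ : Matrix (Fin m × Fin n) (Fin m × Fin n) ℂ) :
    Set (Matrix (Fin n) (Fin n) ℂ) :=
  {σ | IsDensity σ ∧ ∃ E : Matrix (Fin m) (Fin m) ℂ, E.PosSemidef ∧
    σ = trA ((E ⊗ₖ (1 : Matrix (Fin n) (Fin n) ℂ)) * ρ)}

/-- A preparation-and-measurement noncontextual model for a set `K` of density matrices. -/
def HasNCModel {d : ℕ} (K : Set (Matrix (Fin d) (Fin d) ℂ)) : Prop :=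
  ∃ (L : ℕ) (N ω : Fin L → Matrix (Fin d) (Fin d) ℂ),
    (∀ l, (N l).IsHermitian) ∧ (∀ l, IsDensity (ω l)) ∧
    (∀ ρ ∈ K, ∀ l, 0 ≤ (ρ * N l).trace) ∧
    (∀ ρ ∈ K, ∑ l, (ρ * N l).trace = 1) ∧
    (∀ ρ ∈ K, ∀ M : Matrix (Fin d) (Fin d) ℂ, M.PosSemidef → (1 - M).PosSemidef →
      (ρ * M).trace = ∑ l, (ρ * N l).trace * (ω l * M).trace)

/-- Separability of a bipartite density matrix. -/
def Separable {m n : ℕ} (ρ : Matrix (Fin m × Fin n) (Fin m × Fin n) ℂ) : Prop :=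
  ∃ (L : ℕ) (ω : Fin L → Matrix (Fin m) (Fin m) ℂ)
    (κ : Fin L → Matrix (Fin n) (Fin n) ℂ),
    (∀ l, IsDensity (ω l)) ∧ (∀ l, (κ l).PosSemidef) ∧ ρ = ∑ l, ω l ⊗ₖ κ l

/-- The projector |0⟩⟨0|. -/
def proj0 : Matrix (Fin 2) (Fin 2) ℂ := !![1, 0; 0, 0]

/-- The projector |1⟩⟨1|. -/
def proj1 : Matrix (Fin 2) (Fin 2) ℂ := !![0, 0; 0, 1]

/-- The projector |+⟩⟨+|. -/
def projPlus : Matrix (Fin 2) (Fin 2) ℂ := (1 / 2 : ℂ) • !![1, 1; 1, 1]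

/-- The projector |−⟩⟨−|. -/
def projMinus : Matrix (Fin 2) (Fin 2) ℂ := (1 / 2 : ℂ) • !![1, -1; -1, 1]

/-!
In a noncontextual model the effect `1 - P` never fires on a pure state `P`, so every `l` that
occurs with nonzero weight `Tr (P N l)` has `ω l = P`. The functionals
`X ↦ ∑_{ω l = P} Tr (X N l)` are then dual to the pure states of `K`, which must therefore be
linearly independent. The four states of the square are not: both orthonormal bases resolve the
identity.
-/

section PosSemidef

variable {n 𝕜 : Type*} [Fintype n] [RCLike 𝕜] {A B : Matrix n n 𝕜}

lemma exists_eq_conjTranspose_mul_self_of_posSemidef (hA : A.PosSemidef) :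
    ∃ C : Matrix n n 𝕜, A = Cᴴ * C := by
  classical
  open scoped MatrixOrder in
  exact CStarAlgebra.nonneg_iff_eq_star_mul_self.mp hA.nonneg

lemma trace_mul_nonneg_of_posSemidef (hA : A.PosSemidef) (hB : B.PosSemidef) :
    0 ≤ (A * B).trace := by
  obtain ⟨C, rfl⟩ := exists_eq_conjTranspose_mul_self_of_posSemidef hB
  rw [← Matrix.mul_assoc, trace_mul_comm, ← Matrix.mul_assoc]
  exact (hA.mul_mul_conjTranspose_same C).trace_nonneg

lemma mul_eq_zero_of_trace_mul_eq_zero_of_posSemidef (hA : A.PosSemidef) (hB : B.PosSemidef)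
    (h : (A * B).trace = 0) : A * B = 0 := by
  obtain ⟨C, rfl⟩ := exists_eq_conjTranspose_mul_self_of_posSemidef hA
  obtain ⟨D, rfl⟩ := exists_eq_conjTranspose_mul_self_of_posSemidef hB
  have hCD : C * Dᴴ = 0 := by
    rw [← trace_conjTranspose_mul_self_eq_zero_iff, conjTranspose_mul, conjTranspose_conjTranspose,
      Matrix.mul_assoc, trace_mul_comm]
    simpa only [Matrix.mul_assoc] using h
  calc Cᴴ * C * (Dᴴ * D) = Cᴴ * (C * Dᴴ) * D := by simp only [Matrix.mul_assoc]
    _ = 0 := by rw [hCD, Matrix.mul_zero, Matrix.zero_mul]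

end PosSemidef

/-- A pure state: the rank-one projector `|v⟩⟨v|` onto a unit vector `v`. -/
def IsPureState {n : Type*} [Fintype n] (P : Matrix n n ℂ) : Prop :=
  ∃ v : n → ℂ, star v ⬝ᵥ v = 1 ∧ P = vecMulVec v (star v)

lemma isPureState_inv_smul_vecMulVec {n : Type*} [Fintype n] {v : n → ℂ} (hv : v ≠ 0) :
    IsPureState ((star v ⬝ᵥ v)⁻¹ • vecMulVec v (star v)) := by
  obtain ⟨c, hc, hcv⟩ := RCLike.nonneg_iff_exists_ofReal.1 (dotProduct_star_self_nonneg v)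
  have hc0 : c ≠ 0 := by
    rintro rfl
    exact hv (dotProduct_star_self_eq_zero.1 (hcv.symm.trans RCLike.ofReal_zero))
  have hsqrt : (√c)⁻¹ * (√c)⁻¹ = c⁻¹ := by rw [← mul_inv, Real.mul_self_sqrt hc]
  refine ⟨(√c)⁻¹ • v, ?_, ?_⟩
  · rw [star_smul, star_trivial (R := ℝ), smul_dotProduct, dotProduct_smul, smul_smul, hsqrt, ← hcv]
    simp [hc0]
  · rw [star_smul, star_trivial (R := ℝ), smul_vecMulVec, vecMulVec_smul, smul_smul, hsqrt, ← hcv]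
    simp [← Complex.coe_smul]

namespace IsPureState

variable {n : Type*} [Fintype n] {P : Matrix n n ℂ}

lemma posSemidef (hP : IsPureState P) : P.PosSemidef := by
  obtain ⟨v, -, rfl⟩ := hP
  exact posSemidef_vecMulVec_self_star v

lemma isStarProjection (hP : IsPureState P) : IsStarProjection P := by
  refine ⟨?_, hP.posSemidef.isHermitian⟩
  obtain ⟨v, hv, rfl⟩ := hP
  rw [IsIdempotentElem, vecMulVec_mul_vecMulVec, hv, one_smul]

lemma mul_mul_self (hP : IsPureState P) (A : Matrix n n ℂ) : P * A * P = (A * P).trace • P := by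
  obtain ⟨v, -, rfl⟩ := hP
  rw [vecMulVec_mul, vecMulVec_mul_vecMulVec, vecMulVec_smul, mul_vecMulVec, trace_vecMulVec,
    ← dotProduct_mulVec, dotProduct_comm]

variable [DecidableEq n]

lemma posSemidef_one_sub (hP : IsPureState P) : (1 - P).PosSemidef := by
  open scoped MatrixOrder in
  exact hP.isStarProjection.one_sub_nonneg.posSemidef

lemma eq_of_trace_mul_one_sub_eq_zero (hP : IsPureState P) {ω : Matrix n n ℂ} (hω : IsDensity ω)
    (h : (ω * (1 - P)).trace = 0) : ω = P := by
  have hωP : ω = ω * P := by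
    have hω_mul := mul_eq_zero_of_trace_mul_eq_zero_of_posSemidef hω.1 hP.posSemidef_one_sub h
    rwa [Matrix.mul_sub, Matrix.mul_one, sub_eq_zero] at hω_mul
  have hPω : ω = P * ω := by
    simpa only [conjTranspose_mul, hω.1.isHermitian.eq, hP.posSemidef.isHermitian.eq]
      using congrArg conjTranspose hωP
  calc ω = P * ω * P := by rw [← hPω, ← hωP]
    _ = P := by rw [hP.mul_mul_self, ← hωP, hω.2, one_smul]

lemma eq_of_sum_mul_trace_mul_one_sub_eq_zero (hP : IsPureState P) {ι : Type*} [Fintype ι]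
    {p : ι → ℂ} {ω : ι → Matrix n n ℂ} (hp : ∀ i, 0 ≤ p i) (hω : ∀ i, IsDensity (ω i))
    (h : ∑ i, p i * (ω i * (1 - P)).trace = 0) {i : ι} (hi : p i ≠ 0) : ω i = P := by
  have hterm : p i * (ω i * (1 - P)).trace = 0 :=
    (Finset.sum_eq_zero_iff_of_nonneg fun j _ ↦ mul_nonneg (hp j)
      (trace_mul_nonneg_of_posSemidef (hω j).1 hP.posSemidef_one_sub)).1 h i (Finset.mem_univ i)
  exact hP.eq_of_trace_mul_one_sub_eq_zero (hω i) ((mul_eq_zero.1 hterm).resolve_left hi)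

end IsPureState

lemma HasNCModel.exists_dual {d : ℕ} {K : Set (Matrix (Fin d) (Fin d) ℂ)} (hK : HasNCModel K) :
    ∃ f : Matrix (Fin d) (Fin d) ℂ → Module.Dual ℂ (Matrix (Fin d) (Fin d) ℂ),
      ∀ P Q, Q ∈ K → IsPureState Q → f P Q = if P = Q then 1 else 0 := by
  obtain ⟨L, N, ω, -, hω, hpos, hsum, hmodel⟩ := hK
  refine ⟨fun P ↦ ∑ l with ω l = P, (traceLinearMap _ ℂ ℂ) ∘ₗ LinearMap.mulRight ℂ (N l),
    fun P Q hQK hQ ↦ ?_⟩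
  have hrigid {l : Fin L} (hl : (Q * N l).trace ≠ 0) : ω l = Q := by
    refine hQ.eq_of_sum_mul_trace_mul_one_sub_eq_zero (hpos Q hQK) hω ?_ hl
    rw [← hmodel Q hQK (1 - Q) hQ.posSemidef_one_sub (by simpa using hQ.posSemidef),
      hQ.isStarProjection.mul_one_sub_self, trace_zero]
  simp only [LinearMap.sum_apply, LinearMap.comp_apply, LinearMap.mulRight_apply,
    traceLinearMap_apply]
  split_ifs with hPQ
  · rw [← hsum Q hQK, hPQ]
    exact Finset.sum_filter_of_ne fun l _ ↦ hrigid
  · refine Finset.sum_eq_zero fun l hl ↦ ?_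
    by_contra hne
    exact hPQ ((Finset.mem_filter.1 hl).2.symm.trans (hrigid hne))

lemma HasNCModel.linearIndepOn_isPureState {d : ℕ} {K : Set (Matrix (Fin d) (Fin d) ℂ)}
    (hK : HasNCModel K) : LinearIndepOn ℂ id {P | P ∈ K ∧ IsPureState P} := by
  obtain ⟨f, hf⟩ := hK.exists_dual
  refine .of_pairwise_dual_eq_zero_one _ (fun P ↦ f P) (fun P Q hPQ ↦ ?_) fun P ↦ ?_
  · exact (hf P Q Q.2.1 Q.2.2).trans (if_neg (Subtype.coe_ne_coe.2 hPQ))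
  · exact (hf P P P.2.1 P.2.2).trans (if_pos rfl)

theorem square_states_contextual_general {d : ℕ} {K S : Set (Matrix (Fin d) (Fin d) ℂ)}
    (hSK : S ⊆ K) (hpure : ∀ P ∈ S, IsPureState P) (hdep : ¬ LinearIndepOn ℂ id S) :
    ¬ HasNCModel K :=
  fun hK ↦ hdep (hK.linearIndepOn_isPureState.mono fun P hP ↦ ⟨hSK hP, hpure P hP⟩)

lemma not_linearIndepOn_id_of_add_eq_add {R M : Type*} [DivisionRing R] [AddCommGroup M]
    [Module R M] {a b c d : M} (h : a + b = c + d) (ha : a ∉ ({b, c, d} : Set M)) :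
    ¬ LinearIndepOn R id ({a, b, c, d} : Set M) := by
  rw [linearIndepOn_id_insert ha, not_and_not_right]
  rintro -
  rw [eq_sub_of_add_eq h]
  exact sub_mem (add_mem (Submodule.subset_span (by simp)) (Submodule.subset_span (by simp)))
    (Submodule.subset_span (by simp))

lemma isPureState_proj0 : IsPureState proj0 := by
  refine ⟨![1, 0], by simp [dotProduct], ?_⟩
  ext i j; fin_cases i <;> fin_cases j <;> simp [proj0, vecMulVec_apply]

lemma isPureState_proj1 : IsPureState proj1 := by
  refine ⟨![0, 1], by simp [dotProduct], ?_⟩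
  ext i j; fin_cases i <;> fin_cases j <;> simp [proj1, vecMulVec_apply]

lemma isPureState_projPlus : IsPureState projPlus := by
  convert isPureState_inv_smul_vecMulVec (v := ![1, 1]) (by simp) using 1
  ext i j; fin_cases i <;> fin_cases j <;> norm_num [projPlus, vecMulVec, dotProduct]

lemma isPureState_projMinus : IsPureState projMinus := by
  convert isPureState_inv_smul_vecMulVec (v := ![1, -1]) (by simp) using 1
  ext i j; fin_cases i <;> fin_cases j <;> norm_num [projMinus, vecMulVec, dotProduct]

lemma proj0_add_proj1 : proj0 + proj1 = 1 := by
  ext i j; fin_cases i <;> fin_cases j <;> simp [proj0, proj1]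

lemma projPlus_add_projMinus : projPlus + projMinus = 1 := by
  ext i j; fin_cases i <;> fin_cases j <;> norm_num [projPlus, projMinus]

lemma not_linearIndepOn_square :
    ¬ LinearIndepOn ℂ id
      ({proj0, proj1, projPlus, projMinus} : Set (Matrix (Fin 2) (Fin 2) ℂ)) := by
  refine not_linearIndepOn_id_of_add_eq_add (proj0_add_proj1.trans projPlus_add_projMinus.symm) ?_
  rintro (h | h | h) <;> simpa [proj0, proj1, projPlus, projMinus] using congr_fun₂ h 0 0

theorem square_states_contextual :
    ¬ HasNCModel (convexHull ℝ
      ({proj0, proj1, projPlus, projMinus} : Set (Matrix (Fin 2) (Fin 2) ℂ))) :=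
  square_states_contextual_general (subset_convexHull ℝ _)
    (by simp [isPureState_proj0, isPureState_proj1, isPureState_projPlus, isPureState_projMinus])
    not_linearIndepOn_square
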